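/- Let L be a link in the interior of a solid torus T and let D₀, …, D_{m−1} be a cyclically ordered pairwise disjoint collection of meridional discs in T, each intersecting L transversally in exactly n points, with chambers Cᵢ bounded by consecutive discs. Assume N(L ∩ Cᵢ, Cᵢ) ≥ n for each i. Then any meridional disc K of T that is disjoint from ⋃ᵢ Dᵢ satisfies |L ∩ K| ≥ n. -/

import Mathlib

open Set Topology unitInterval

noncomputable section

/-- The closed unit 2-disc `B²` in the complex plane. -/
abbrev Disc2 : Set ℂ := Metric.closedBall 0 1

variable {X : Type} [TopologicalSpace X] {Y : Type} [TopologicalSpace Y]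

/-- A simple closed curve: a subset homeomorphic to the circle. -/
def IsSimpleClosedCurve (A : Set X) : Prop := Nonempty (↥A ≃ₜ Circle)

/-- An arc: a subset homeomorphic to the unit interval. -/
def IsArc (A : Set X) : Prop := Nonempty (↥A ≃ₜ unitInterval)

/-- A link: a finite disjoint union of simple closed curves. -/
def IsLink (L : Set X) : Prop :=
  ∃ (k : ℕ) (c : Fin k → Set X), (∀ i, IsSimpleClosedCurve (c i)) ∧
    (Pairwise fun i j => Disjoint (c i) (c j)) ∧ L = ⋃ i, c i

/-- `A` is null-homotopic inside the subset `Y`: `A ⊆ Y` and the inclusion of `A`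
into `Y` is homotopic to a constant map. -/
def NullHomotopicIn (A Y : Set X) : Prop :=
  ∃ (h : A ⊆ Y) (y : ↥Y),
    (⟨Set.inclusion h, continuous_inclusion h⟩ : C(↥A, ↥Y)).Homotopic
      (ContinuousMap.const _ y)

/-- Two simple closed curves `A` and `B` are isotopic within the subset `Y`:
there is a continuous one-parameter family of embedded circles in `Y`
starting at a parametrization of `A` and ending at one of `B`. -/
def IsotopicCirclesIn (Y A B : Set X) : Prop :=
  ∃ H : C(Circle × unitInterval, X),
    (∀ t, Function.Injective fun s => H (s, t)) ∧
    (∀ s t, H (s, t) ∈ Y) ∧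
    (Set.range fun s => H (s, 0)) = A ∧
    (Set.range fun s => H (s, 1)) = B

/-- A solid torus in `X`: a subset together with a homeomorphism to `B² × S¹`. -/
structure SolidTorus (X : Type) [TopologicalSpace X] where
  carrier : Set X
  homeo : ↥carrier ≃ₜ ↥Disc2 × Circle

namespace SolidTorus

variable (T : SolidTorus X)

/-- The boundary torus `∂T`, corresponding to `∂B² × S¹`. -/
def bdry : Set X := Subtype.val '' (T.homeo ⁻¹' {p | ‖(p.1 : ℂ)‖ = 1})

/-- The (manifold) interior of the solid torus, corresponding to `int B² × S¹`. -/
def intr : Set X := Subtype.val '' (T.homeo ⁻¹' {p | ‖(p.1 : ℂ)‖ < 1})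

/-- The standard meridian curve `∂B² × {1}` on the boundary of the solid torus. -/
def meridianCurve : Set X :=
  Subtype.val '' (T.homeo ⁻¹' {p | ‖(p.1 : ℂ)‖ = 1 ∧ p.2 = 1})

/-- The core circle `{0} × S¹` of the solid torus. -/
def core : Set X := Subtype.val '' (T.homeo ⁻¹' {p | (p.1 : ℂ) = 0})

end SolidTorus

/-- A meridional disc of a solid torus `T`: an embedded disc `D ⊆ T` with
`D ∩ ∂T = ∂D` and with `∂D` isotopic in `∂T` to the meridian `∂B² × {pt}`. -/
structure MeridionalDisc (T : SolidTorus X) where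
  carrier : Set X
  subset : carrier ⊆ T.carrier
  homeo : ↥carrier ≃ₜ ↥Disc2
  bdry : Set X
  bdry_spec : bdry = Subtype.val '' (homeo ⁻¹' {p | ‖(p : ℂ)‖ = 1})
  inter_bdry : carrier ∩ T.bdry = bdry
  isotopic_meridian : IsotopicCirclesIn T.bdry bdry T.meridianCurve

/-- The geometric index `N(L, T)` of a subset `L` of a solid torus `T`:
the minimum over all meridional discs `D` of `T` of the number of points of `L ∩ D`. -/
def geomIndex (L : Set X) (T : SolidTorus X) : ℕ∞ :=
  ⨅ D : MeridionalDisc T, (L ∩ D.carrier).encard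

/-- The geometric index of a finite union of disjoint solid tori in `T`:
the geometric index of a core link of the union. -/
def geomIndexTori {k : ℕ} (F : Fin k → SolidTorus X) (T : SolidTorus X) : ℕ∞ :=
  geomIndex (⋃ i, (F i).core) T

/-- The 3-sphere. -/
abbrev S3 : Type := ↥(Metric.sphere (0 : EuclideanSpace ℝ (Fin 4)) 1)

/-- A simple closed curve is an unknot if it bounds an embedded disc. -/
def IsUnknot (J : Set X) : Prop :=
  ∃ (D : Set X) (e : ↥D ≃ₜ ↥Disc2),
    J = Subtype.val '' (e ⁻¹' {p | ‖(p : ℂ)‖ = 1})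

/-- A solid torus is unknotted if its core circle is an unknot. -/
def SolidTorus.Unknotted (T : SolidTorus X) : Prop := IsUnknot T.core

/-- The surface `D` and the set `L` intersect transversally at `x`: in suitable
local coordinates, `D` is the plane `z = 0` and `L` is the `z`-axis. -/
def TransverseAt (D L : Set X) (x : X) : Prop :=
  ∃ (U : Set X) (φ : ↥U ≃ₜ EuclideanSpace ℝ (Fin 3)), IsOpen U ∧ x ∈ U ∧
    (φ '' {y : ↥U | (y : X) ∈ D}) = {v | v 2 = 0} ∧
    (φ '' {y : ↥U | (y : X) ∈ L}) = {v | v 0 = 0 ∧ v 1 = 0}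

/-- `D` meets `L` transversally. -/
def MeetsTransversally (D L : Set X) : Prop := ∀ x ∈ D ∩ L, TransverseAt D L x

/-- `S` separates `A` from `B`: `A` and `B` are disjoint from `S` and no
connected subset of the complement of `S` meets both `A` and `B`. -/
def Separates (S A B : Set X) : Prop :=
  Disjoint A S ∧ Disjoint B S ∧
  ∀ P : Set X, IsPreconnected P → Disjoint P S →
    (P ∩ A).Nonempty → (P ∩ B).Nonempty → False

/-- Two disjoint embedded tori `A` and `B` are parallel: the compact region they
cobound is homeomorphic to `A × [0,1]`. -/
def ParallelTori (A B : Set X) : Prop :=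
  ∃ R : Set X, IsCompact R ∧ A ⊆ R ∧ B ⊆ R ∧ frontier R = A ∪ B ∧
    Nonempty (↥R ≃ₜ ↥A × unitInterval)

/-- A chamber: a subset together with a homeomorphism to `B² × [0,1]`. -/
structure Chamber (X : Type) [TopologicalSpace X] where
  carrier : Set X
  homeo : ↥carrier ≃ₜ ↥Disc2 × unitInterval

namespace Chamber

variable (C : Chamber X)

/-- The top `C_t = B² × {1}` of the chamber. -/
def top : Set X := Subtype.val '' (C.homeo ⁻¹' {p | p.2 = 1})

/-- The bottom `C_b = B² × {0}` of the chamber. -/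
def bot : Set X := Subtype.val '' (C.homeo ⁻¹' {p | p.2 = 0})

/-- The boundary `∂C = (∂B² × [0,1]) ∪ (B² × {0,1})` of the chamber. -/
def bdry : Set X :=
  Subtype.val '' (C.homeo ⁻¹' {p | ‖(p.1 : ℂ)‖ = 1 ∨ p.2 = 0 ∨ p.2 = 1})

/-- The side annulus `∂C − (C_t ∪ C_b)`. -/
def sideAnnulus : Set X := C.bdry \ (C.top ∪ C.bot)

end Chamber

/-- An interior meridional disc of a chamber `C`: an embedded disc
`M ⊆ C − (C_t ∪ C_b)` with `M ∩ ∂C = ∂M` and `∂M` essential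
(non null-homotopic) in the annulus `∂C − (C_t ∪ C_b)`. -/
structure InteriorMeridionalDisc (C : Chamber X) where
  carrier : Set X
  subset : carrier ⊆ C.carrier \ (C.top ∪ C.bot)
  homeo : ↥carrier ≃ₜ ↥Disc2
  bdry : Set X
  bdry_spec : bdry = Subtype.val '' (homeo ⁻¹' {p | ‖(p : ℂ)‖ = 1})
  inter_bdry : carrier ∩ C.bdry = bdry
  bdry_sub : bdry ⊆ C.sideAnnulus
  essential : ¬ NullHomotopicIn bdry C.sideAnnulus

/-- The geometric index `N(L, C)` of a subset `L` of a chamber `C`: the minimum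
over all interior meridional discs `M` of `C` of the number of points of `L ∩ M`. -/
def chamberIndex (L : Set X) (C : Chamber X) : ℕ∞ :=
  ⨅ M : InteriorMeridionalDisc C, (L ∩ M.carrier).encard

/-- A spanning arc in a chamber `C`: an embedded arc with one endpoint in the
bottom, the other endpoint in the top, and interior in the interior of `C`. -/
def IsSpanningArc (A : Set X) (C : Chamber X) : Prop :=
  A ⊆ C.carrier ∧ ∃ e : unitInterval ≃ₜ ↥A,
    ((e 0 : ↥A) : X) ∈ C.bot ∧ ((e 1 : ↥A) : X) ∈ C.top ∧
    ∀ t : unitInterval, t ≠ 0 → t ≠ 1 → ((e t : ↥A) : X) ∈ C.carrier \ C.bdry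

/-- An embedded arc in the chamber `C` with both endpoints in the set `F`
(e.g. `F = C.top`) and interior in the interior of `C`. -/
def IsArcWithEndpointsIn (A : Set X) (C : Chamber X) (F : Set X) : Prop :=
  A ⊆ C.carrier ∧ ∃ e : unitInterval ≃ₜ ↥A,
    ((e 0 : ↥A) : X) ∈ F ∧ ((e 1 : ↥A) : X) ∈ F ∧
    ∀ t : unitInterval, t ≠ 0 → t ≠ 1 → ((e t : ↥A) : X) ∈ C.carrier \ C.bdry

/-- A link in a chamber `C`: a finite disjoint union of arcs with endpoints in
`C_t ∪ C_b` (meeting `∂C` only at their endpoints) and of simple closed curves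
in `C − ∂C`. -/
def IsChamberLink (L : Set X) (C : Chamber X) : Prop :=
  ∃ (p q : ℕ) (a : Fin p → Set X) (s : Fin q → Set X),
    (∀ i, IsArcWithEndpointsIn (a i) C (C.top ∪ C.bot)) ∧
    (∀ j, IsSimpleClosedCurve (s j) ∧ s j ⊆ C.carrier \ C.bdry) ∧
    (Pairwise fun i j => Disjoint (a i) (a j)) ∧
    (Pairwise fun i j => Disjoint (s i) (s j)) ∧
    (∀ i j, Disjoint (a i) (s j)) ∧
    L = (⋃ i, a i) ∪ ⋃ j, s j

/-- A clasp in a chamber `C`: a link `A ∪ B ∪ S` of geometric index 2 in `C`,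
where `A` is an arc with both endpoints in `C_t`, `B` is an arc with both
endpoints in `C_b`, and `S` is a possibly empty union of simple closed curves
in `C − ∂C`. -/
def IsClasp (K : Set X) (C : Chamber X) : Prop :=
  ∃ A B S : Set X,
    IsArcWithEndpointsIn A C C.top ∧ IsArcWithEndpointsIn B C C.bot ∧
    (∃ (q : ℕ) (s : Fin q → Set X), (∀ j, IsSimpleClosedCurve (s j) ∧
        s j ⊆ C.carrier \ C.bdry) ∧
      (Pairwise fun i j => Disjoint (s i) (s j)) ∧ S = ⋃ j, s j) ∧
    Disjoint A B ∧ Disjoint A S ∧ Disjoint B S ∧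
    K = A ∪ B ∪ S ∧ chamberIndex K C = 2

/-- A system of `m` cyclically ordered pairwise disjoint meridional discs in a
solid torus `T`, cutting `T` into `m` chambers, the `i`-th chamber lying between
the consecutive discs `D_i` (its bottom) and `D_{i+1 mod m}` (its top). -/
structure ChamberSystem (T : SolidTorus X) (m : ℕ) where
  disc : Fin m → MeridionalDisc T
  disc_disjoint : Pairwise fun i j => Disjoint (disc i).carrier (disc j).carrier
  chamber : Fin m → Chamber X
  chamber_sub : ∀ i, (chamber i).carrier ⊆ T.carrier
  bot_eq : ∀ i, (chamber i).bot = (disc i).carrier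
  top_eq : ∀ i, (chamber i).top = (disc (finRotate m i)).carrier
  cover : (⋃ i, (chamber i).carrier) = T.carrier
  overlap : ∀ i j, i ≠ j →
    (chamber i).carrier ∩ (chamber j).carrier ⊆ ⋃ k, (disc k).carrier

/-- Each meridional disc of the system meets `L` transversally in exactly `n` points. -/
def ChamberSystem.Transversal {T : SolidTorus X} {m : ℕ} (S : ChamberSystem T m)
    (L : Set X) (n : ℕ) : Prop :=
  ∀ i, MeetsTransversally (S.disc i).carrier L ∧
    (L ∩ (S.disc i).carrier).encard = n

/-- The winding degree of a self-map of the circle, via a lift along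
`t ↦ exp (i t)`. -/
def CircleDegree (f : C(Circle, Circle)) (n : ℤ) : Prop :=
  ∃ F : C(ℝ, ℝ), (∀ t : ℝ, Circle.exp (F t) = f (Circle.exp t)) ∧
    F (2 * Real.pi) = F 0 + n * (2 * Real.pi)

/-- The algebraic index of a simple closed curve `J` in a solid torus `T` is `a`:
`J ⊆ T` and some (hence, up to sign, any) parametrization of `J`, composed with
the projection of `T ≅ B² × S¹` to the `S¹` factor, has winding degree `±a`. -/
def HasAlgIndex (J : Set X) (T : SolidTorus X) (a : ℕ) : Prop :=
  ∃ (hJ : J ⊆ T.carrier) (e : Circle ≃ₜ ↥J) (n : ℤ),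
    CircleDegree ⟨fun s => (T.homeo (Set.inclusion hJ (e s))).2,
      continuous_snd.comp (T.homeo.continuous.comp
        ((continuous_inclusion hJ).comp e.continuous))⟩ n ∧ a = n.natAbs

/-!
Being connected and disjoint from the discs, `K` lies in a single chamber `C`. Away from the top and
the bottom of `C`, the boundary of `C` is the part of `C` on `∂T`; hence `∂K = K ∩ ∂T` is also
`K ∩ ∂C`. The meridian is essential in `∂T`, as the coordinate `B² × S¹ → B²` maps it once around
the circle, so `∂K` is essential in the side annulus of `C`, which is contained in `∂T`. Thus `K` is
an interior meridional disc of `C`.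

That the side annulus lies on `∂T` is invariance of domain in dimension 3, and it uses that the
chambers fill `T` and overlap in the discs only: a point of the side of `C` in the interior of `T`
would have a neighbourhood in `T` contained in `C`. Invariance of domain reduces to the fact that an
odd map from the 2-sphere to `ℝ³ ∖ 0` is not null-homotopic. If it were, it would lift through the
Hopf fibration, and comparing the lifts at antipodal points would give an odd map from the 2-sphere
to `ℂ ∖ 0`; the restriction of this map to the equator would be odd and null-homotopic, and a
logarithm of it contradicts the intermediate value theorem.
-/

open Metric Filter Function
open scoped Quaternion

section OddMaps

variable {A B E F G : Type*} [TopologicalSpace A] [TopologicalSpace B]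
  [NormedAddCommGroup E] [NormedAddCommGroup F] [NormedAddCommGroup G]

/-- The part of the Borsuk–Ulam theorem from which invariance of domain follows: no odd map from the
unit sphere of `E` to `F ∖ 0` is homotopic to a constant. -/
def OddMapsEssential (E F : Type*) [NormedAddCommGroup E] [NormedAddCommGroup F] : Prop :=
  ∀ g : C(sphere (0 : E) 1, {w : F // w ≠ 0}), (∀ s, (g (-s) : F) = -g s) → ¬ g.Nullhomotopic

theorem OddMapsEssential.of_injective (h : OddMapsEssential E F) {ι : G →+ F} (hι : Continuous ι)
    (hinj : Injective ι) : OddMapsEssential E G := by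
  intro g hodd hnull
  let j : C({w : G // w ≠ 0}, {w : F // w ≠ 0}) :=
    ⟨fun w => ⟨ι w, (map_ne_zero_iff ι hinj).2 w.2⟩, by fun_prop⟩
  exact h (j.comp g) (fun s => by simp [j, hodd]) (hnull.comp_right j)

theorem exists_lift_of_nullhomotopic {p : A → B} (hp : IsCoveringMap p) (hsurj : Surjective p)
    {S : Type*} [TopologicalSpace S] {g : C(S, B)} (hg : g.Nullhomotopic) :
    ∃ l : C(S, A), p ∘ l = g := by
  obtain ⟨b, ⟨H⟩⟩ := hg
  obtain ⟨a, rfl⟩ := hsurj b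
  have hconst : ∀ s, H.symm.toContinuousMap (0, s) = p (ContinuousMap.const S a s) := by simp
  let lift := hp.liftHomotopy H.symm.toContinuousMap (.const S a) hconst
  refine ⟨lift.comp (.prodMk (.const S 1) (.id S)), funext fun s => ?_⟩
  have := congrFun (hp.liftHomotopy_lifts H.symm.toContinuousMap (.const S a) hconst) (1, s)
  simpa [lift] using this

theorem oddMapsEssential_complex : OddMapsEssential ℂ ℂ := by
  intro g hodd hnull
  obtain ⟨l, hl⟩ := exists_lift_of_nullhomotopic Complex.isCoveringMap_exp
    (fun z => ⟨Complex.log z, Subtype.ext (Complex.exp_log z.2)⟩) hnull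
  have hexp : ∀ s, Complex.exp (l s) = g s := fun s => congrArg Subtype.val (congrFun hl s)
  let d : sphere (0 : ℂ) 1 → ℂ := fun s => l (-s) - l s
  have hd : Continuous fun s => (d s).im := by fun_prop
  have hneg : ∀ s, (d (-s)).im = -(d s).im := fun s => by simp [d]
  obtain ⟨s, hs⟩ : ∃ s, (d s).im = 0 := by
    have : ConnectedSpace (sphere (0 : ℂ) 1) := isConnected_iff_connectedSpace.1
      (isConnected_sphere (by simp) _ zero_le_one)
    obtain ⟨s₀⟩ : Nonempty (sphere (0 : ℂ) 1) := inferInstance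
    rcases le_total (d s₀).im 0 with h | h
    · exact mem_range_of_exists_le_of_exists_ge hd ⟨s₀, h⟩ ⟨-s₀, by simpa [hneg]⟩
    · exact mem_range_of_exists_le_of_exists_ge hd ⟨-s₀, by simpa [hneg]⟩ ⟨s₀, h⟩
  have hd_exp : Complex.exp (d s) = -1 := by
    rw [Complex.exp_sub, hexp, hexp, hodd, neg_div, div_self (g s).2]
  have hre := congrArg Complex.re hd_exp
  rw [Complex.exp_re, hs, Real.cos_zero, mul_one, Complex.neg_re, Complex.one_re] at hre
  linarith [Real.exp_pos (d s).re]

theorem nullhomotopic_of_factorsThrough [ContractibleSpace B] {C : Type*} [TopologicalSpace C]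
    (f : C(B, C)) (g : C(A, B)) : (f.comp g).Nullhomotopic :=
  ((id_nullhomotopic B).comp_right f).comp_left g

theorem contractibleSpace_closedBall (E : Type*) [NormedAddCommGroup E] [NormedSpace ℝ E] :
    ContractibleSpace (closedBall (0 : E) 1) :=
  (convex_closedBall 0 1).contractibleSpace (nonempty_closedBall.2 zero_le_one)

/-- The equator of the unit sphere of `E × ℝ`. -/
def equator (E : Type*) [NormedAddCommGroup E] : C(sphere (0 : E) 1, sphere (0 : E × ℝ) 1) :=
  ⟨fun z => ⟨((z : E), 0), by simp⟩, by fun_prop⟩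

theorem equator_neg (z : sphere (0 : E) 1) : equator E (-z) = -equator E z :=
  Subtype.ext (by simp [equator])

-- For the sup norm on `E × ℝ`, the unit sphere contains both `sphere × [-1, 1]` and
-- `closedBall × {1}`, so the equator contracts without any normalisation.
theorem nullhomotopic_equator [NormedSpace ℝ E] : (equator E).Nullhomotopic := by
  have := contractibleSpace_closedBall E
  let incl : C(sphere (0 : E) 1, closedBall (0 : E) 1) :=
    ⟨inclusion sphere_subset_closedBall, continuous_inclusion _⟩
  let lid : C(closedBall (0 : E) 1, sphere (0 : E × ℝ) 1) :=
    ⟨fun z => ⟨((z : E), 1), by simp [mem_closedBall_zero_iff.1 z.2]⟩, by fun_prop⟩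
  have hraise : (equator E).Homotopic (lid.comp incl) :=
    ⟨{ toFun := fun q => ⟨((q.2 : E), (q.1 : ℝ)), by simp [abs_of_nonneg q.1.2.1, q.1.2.2]⟩
       map_zero_left := fun z => Subtype.ext (by simp [equator])
       map_one_left := fun z => Subtype.ext (by simp [lid, incl]) }⟩
  obtain ⟨c, hc⟩ := nullhomotopic_of_factorsThrough lid incl
  exact ⟨c, hraise.trans hc⟩

theorem OddMapsEssential.exists_eq_zero [NormedSpace ℝ E] (h : OddMapsEssential E F)
    (d : C(sphere (0 : E × ℝ) 1, F)) (hodd : ∀ s, d (-s) = -d s) : ∃ s, d s = 0 := by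
  by_contra! hd
  let d' : C(sphere (0 : E × ℝ) 1, {w : F // w ≠ 0}) := ⟨fun s => ⟨d s, hd s⟩, by fun_prop⟩
  exact h (d'.comp (equator E)) (fun z => by simp [d', equator_neg, hodd])
    (nullhomotopic_equator.comp_right d')

end OddMaps

section HopfLift

variable {A : Type*} [TopologicalSpace A]

theorem quaternion_skewAdjoint_mul_self (w : skewAdjoint ℍ) :
    (w * w : ℍ) = -((‖w‖ ^ 2 : ℝ) : ℍ) := by
  have hw := Quaternion.star_mul_self (w : ℍ)
  rw [skewAdjoint.mem_iff.1 w.2, neg_mul, neg_eq_iff_eq_neg,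
    Quaternion.normSq_eq_norm_mul_self] at hw
  rw [hw, sq]
  rfl

/-- The imaginary quaternion with the given coordinates. -/
@[simps]
def imaginaryQuaternion (w : ℂ × ℝ) : ℍ := ⟨0, w.1.re, w.1.im, w.2⟩

/-- The imaginary quaternion unit `k`. -/
def quaternionK : ℍ := imaginaryQuaternion (0, 1)

theorem quaternionK_mul_self : quaternionK * quaternionK = -1 := by
  ext <;> simp [quaternionK]

/-- The nonzero quaternion `q` lies over `w` in the Hopf fibration `q ↦ q k q⁻¹`, extended radially
to a fibration over the nonzero imaginary quaternions. Multiplying by `q` makes the relation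
polynomial. -/
def HopfLiesOver (q : ℍ) (w : skewAdjoint ℍ) : Prop :=
  q ≠ 0 ∧ w * q = ‖w‖ • (q * quaternionK)

/-- The map `g` to the imaginary quaternions lifts continuously through the Hopf fibration. -/
def HasHopfLift (g : A → skewAdjoint ℍ) : Prop :=
  ∃ q : C(A, ℍ), ∀ a, HopfLiesOver (q a) (g a)

/-- For fixed `w` the projection of `ℍ`, up to scaling, onto the line lying over `w`. -/
def hopfProj (w : skewAdjoint ℍ) (q : ℍ) : ℍ := ‖w‖ • q - w * q * quaternionK

theorem mul_hopfProj (w : skewAdjoint ℍ) (q : ℍ) :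
    w * hopfProj w q = ‖w‖ • (hopfProj w q * quaternionK) := by
  have hw : (w * (w * q * quaternionK) : ℍ) = -(‖w‖ ^ 2 • (q * quaternionK)) := by
    rw [← mul_assoc, ← mul_assoc, quaternion_skewAdjoint_mul_self, neg_mul, neg_mul,
      Quaternion.coe_mul_eq_smul, smul_mul_assoc]
  rw [hopfProj, mul_sub, hw, sub_mul, mul_assoc (w * q : ℍ), quaternionK_mul_self]
  simp only [mul_smul_comm, smul_mul_assoc, mul_neg, mul_one]
  module

theorem mul_eq_neg_of_hopfProj_eq_zero {w : skewAdjoint ℍ} {q : ℍ} (h : hopfProj w q = 0) :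
    (w * q : ℍ) = -(‖w‖ • (q * quaternionK)) := by
  have h' := congrArg (· * quaternionK) (sub_eq_zero.1 h)
  simp only [mul_assoc, quaternionK_mul_self, smul_mul_assoc, mul_neg, mul_one] at h'
  rw [h', neg_neg]

theorem hopfLiesOver_hopfProj_of_norm_sub_lt {w₀ w₁ : skewAdjoint ℍ} {q : ℍ}
    (hq : HopfLiesOver q w₀) (hw : ‖w₀ - w₁‖ < ‖w₀‖ + ‖w₁‖) :
    HopfLiesOver (hopfProj w₁ q) w₁ := by
  refine ⟨fun h => hw.ne ?_, mul_hopfProj w₁ q⟩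
  have hsub : ((w₀ - w₁ : skewAdjoint ℍ) : ℍ) * q = (‖w₀‖ + ‖w₁‖) • (q * quaternionK) := by
    rw [AddSubgroup.coe_sub, sub_mul, hq.2, mul_eq_neg_of_hopfProj_eq_zero h, sub_neg_eq_add,
      add_smul]
  have hk : ‖quaternionK‖ = 1 := by
    rw [← sq_eq_sq₀ (norm_nonneg _) zero_le_one, sq, ← norm_mul, quaternionK_mul_self]
    simp
  have hnorm := congrArg norm hsub
  rw [norm_mul, norm_smul, norm_mul, hk, mul_one, Real.norm_of_nonneg (by positivity)] at hnorm
  exact mul_right_cancel₀ (norm_ne_zero_iff.2 hq.1) hnorm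

theorem HasHopfLift.of_norm_sub_lt {g₀ g₁ : A → skewAdjoint ℍ} (hg₁ : Continuous g₁)
    (h : ∀ a, ‖g₀ a - g₁ a‖ < ‖g₀ a‖ + ‖g₁ a‖) (hg₀ : HasHopfLift g₀) : HasHopfLift g₁ := by
  obtain ⟨q, hq⟩ := hg₀
  exact ⟨⟨fun a => hopfProj (g₁ a) (q a), by unfold hopfProj; fun_prop⟩,
    fun a => hopfLiesOver_hopfProj_of_norm_sub_lt (hq a) (h a)⟩

theorem hasHopfLift_iff_of_norm_sub_lt {g₀ g₁ : A → skewAdjoint ℍ} (hg₀ : Continuous g₀)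
    (hg₁ : Continuous g₁) (h : ∀ a, ‖g₀ a - g₁ a‖ < ‖g₀ a‖ + ‖g₁ a‖) :
    HasHopfLift g₀ ↔ HasHopfLift g₁ :=
  ⟨.of_norm_sub_lt hg₁ h, .of_norm_sub_lt hg₀ fun a => by
    rw [norm_sub_rev, add_comm]; exact h a⟩

theorem hasHopfLift_const {w : skewAdjoint ℍ} (hw : w ≠ 0) : HasHopfLift fun _ : A => w := by
  obtain ⟨q, hq⟩ : ∃ q, hopfProj w q ≠ 0 := by
    by_contra! h
    have hwk := mul_eq_neg_of_hopfProj_eq_zero (h 1)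
    rw [mul_one, one_mul] at hwk
    have hcomm := congrArg (·.imJ) (mul_eq_neg_of_hopfProj_eq_zero (h (imaginaryQuaternion (1, 0))))
    rw [hwk] at hcomm
    have hnorm : -‖w‖ = ‖w‖ := by simpa [quaternionK] using hcomm
    linarith [norm_pos_iff.2 hw]
  exact ⟨.const A (hopfProj w q), fun _ => ⟨hq, mul_hopfProj w q⟩⟩

theorem HasHopfLift.of_homotopic [CompactSpace A] {g₀ g₁ : C(A, {w : skewAdjoint ℍ // w ≠ 0})}
    (h : g₀.Homotopic g₁) (hg₀ : HasHopfLift fun a => (g₀ a : skewAdjoint ℍ)) :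
    HasHopfLift fun a => (g₁ a : skewAdjoint ℍ) := by
  obtain ⟨H⟩ := h
  have hloc : IsLocallyConstant fun t : I => HasHopfLift fun a => (H (t, a) : skewAdjoint ℍ) := by
    rw [IsLocallyConstant.iff_eventually_eq]
    intro t₀
    have hclose : ∀ᶠ t in 𝓝 t₀, ∀ a ∈ (univ : Set A), ‖(H (t, a) - H (t₀, a) : skewAdjoint ℍ)‖ <
        ‖(H (t, a) : skewAdjoint ℍ)‖ + ‖(H (t₀, a) : skewAdjoint ℍ)‖ := by
      refine isCompact_univ.eventually_forall_of_forall_eventually fun a _ => ?_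
      have hH : Continuous fun p : I × A => (H p : skewAdjoint ℍ) := by fun_prop
      have hH₀ : Continuous fun p : I × A => (H (t₀, p.2) : skewAdjoint ℍ) := by fun_prop
      refine ((hH.sub hH₀).norm.continuousAt).eventually_lt (hH.norm.add hH₀.norm).continuousAt ?_
      simpa using norm_pos_iff.2 (H (t₀, a)).2
    filter_upwards [hclose] with t ht
    exact propext (hasHopfLift_iff_of_norm_sub_lt (by fun_prop) (by fun_prop) fun a => ht a trivial)
  simpa [hg₀] using hloc.apply_eq_of_preconnectedSpace 0 1

theorem HopfLiesOver.star_mul {w : skewAdjoint ℍ} {q : ℍ} (hq : HopfLiesOver q w) :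
    star q * w = ‖w‖ • (quaternionK * star q) := by
  have hk : star quaternionK = -quaternionK := by ext <;> simp [quaternionK]
  have h := congrArg star hq.2
  simpa [skewAdjoint.mem_iff.1 w.2, hk] using h

theorem HopfLiesOver.quaternionK_mul_star_mul {w : skewAdjoint ℍ} (hw : w ≠ 0) {q q' : ℍ}
    (hq : HopfLiesOver q w) (hq' : HopfLiesOver q' (-w)) :
    quaternionK * (star q * q') = -(star q * q' * quaternionK) := by
  have hq'w : (w * q' : ℍ) = -(‖w‖ • (q' * quaternionK)) := by
    rw [← norm_neg w, ← hq'.2, AddSubgroup.coe_neg, neg_mul, neg_neg]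
  refine smul_right_injective ℍ (norm_ne_zero_iff.2 hw) ?_
  calc ‖w‖ • (quaternionK * (star q * q')) = star q * w * q' := by
        rw [hq.star_mul, smul_mul_assoc, mul_assoc]
    _ = ‖w‖ • -(star q * q' * quaternionK) := by
        rw [mul_assoc, hq'w, mul_neg, mul_smul_comm, smul_neg, mul_assoc]

theorem re_eq_zero_and_imK_eq_zero_of_anticommute {e : ℍ}
    (he : quaternionK * e = -(e * quaternionK)) : e.re = 0 ∧ e.imK = 0 := by
  have hre := congrArg (·.re) he
  have hK := congrArg (·.imK) he
  simp only [quaternionK, Quaternion.re_mul, re_imaginaryQuaternion, zero_mul,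
    imI_imaginaryQuaternion, Complex.zero_re, sub_self, imJ_imaginaryQuaternion, Complex.zero_im,
    imK_imaginaryQuaternion, one_mul, zero_sub, Quaternion.re_neg, mul_zero, mul_one, neg_neg,
    Quaternion.imK_mul, add_zero, zero_add, Quaternion.imK_neg, sub_zero] at hre hK
  constructor <;> linarith

-- If `q` and `q'` lie over `w` and `-w`, then `star q * q'` anticommutes with `k`, so it is in the
-- span of `i` and `j`: a lift of an odd map gives a nowhere vanishing odd map to a plane.
theorem not_hasHopfLift_of_odd {g : sphere (0 : ℂ × ℝ) 1 → skewAdjoint ℍ} (hg : ∀ s, g s ≠ 0)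
    (hodd : ∀ s, g (-s) = -g s) : ¬ HasHopfLift g := by
  rintro ⟨q, hq⟩
  let e : sphere (0 : ℂ × ℝ) 1 → ℍ := fun s => star (q s) * q (-s)
  have he : ∀ s, e s ≠ 0 := fun s => mul_ne_zero (star_ne_zero.2 (hq s).1) (hq (-s)).1
  have he_neg : ∀ s, e (-s) = star (e s) := fun s => by simp [e]
  have he_anti : ∀ s, (e s).re = 0 ∧ (e s).imK = 0 := fun s =>
    re_eq_zero_and_imK_eq_zero_of_anticommute
      ((hq s).quaternionK_mul_star_mul (hg s) (hodd s ▸ hq (-s)))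
  have he_cont : Continuous e := by fun_prop
  let d : C(sphere (0 : ℂ × ℝ) 1, ℂ) := ⟨fun s => ⟨(e s).imI, (e s).imJ⟩,
    Complex.equivRealProdCLM.symm.continuous.comp
      ((Quaternion.continuous_imI.comp he_cont).prodMk (Quaternion.continuous_imJ.comp he_cont))⟩
  obtain ⟨s, hs⟩ := oddMapsEssential_complex.exists_eq_zero d fun s =>
    Complex.ext (congrArg (·.imI) (he_neg s)) (congrArg (·.imJ) (he_neg s))
  exact he s (Quaternion.ext _ _ (he_anti s).1 (congrArg Complex.re hs) (congrArg Complex.im hs)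
    (he_anti s).2)

theorem continuous_imaginaryQuaternion : Continuous imaginaryQuaternion := by
  have h : imaginaryQuaternion = fun w =>
      Quaternion.linearIsometryEquivTuple.symm !₂[0, w.1.re, w.1.im, w.2] := by
    ext w <;> simp
  rw [h]
  fun_prop

theorem imaginaryQuaternion_injective : Injective imaginaryQuaternion := fun _ _ h =>
  Prod.ext (Complex.ext (congrArg (·.imI) h) (congrArg (·.imJ) h)) (congrArg (·.imK) h)

theorem oddMapsEssential_complex_prod_real : OddMapsEssential (ℂ × ℝ) (ℂ × ℝ) := by
  have h : OddMapsEssential (ℂ × ℝ) (skewAdjoint ℍ) := by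
    rintro g hodd ⟨c, hc⟩
    exact not_hasHopfLift_of_odd (fun s => (g s).2) hodd
      ((hasHopfLift_const c.2).of_homotopic (g₀ := .const _ c) hc.symm)
  let ι : ℂ × ℝ →+ skewAdjoint ℍ :=
    { toFun := fun w => ⟨imaginaryQuaternion w, by rw [skewAdjoint.mem_iff]; ext <;> simp⟩
      map_zero' := Subtype.ext (by ext <;> simp)
      map_add' := fun w w' => Subtype.ext (by ext <;> simp) }
  exact h.of_injective (ι := ι) (continuous_imaginaryQuaternion.subtype_mk _)
    fun w w' hw => imaginaryQuaternion_injective (congrArg Subtype.val hw)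

end HopfLift

section InvarianceOfDomain

theorem homotopic_of_norm_sub_lt {A F : Type*} [TopologicalSpace A] [NormedAddCommGroup F]
    [NormedSpace ℝ F] {g₀ g₁ : C(A, {w : F // w ≠ 0})}
    (h : ∀ a, ‖(g₁ a : F) - g₀ a‖ < ‖(g₀ a : F)‖) : g₀.Homotopic g₁ := by
  have hne : ∀ q : I × A, (g₀ q.2 : F) + (q.1 : ℝ) • ((g₁ q.2 : F) - g₀ q.2) ≠ 0 := by
    rintro ⟨t, a⟩ h0
    refine (h a).not_ge ((congrArg norm (eq_neg_of_add_eq_zero_left h0)).trans_le ?_)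
    rw [norm_neg, norm_smul, Real.norm_of_nonneg t.2.1]
    exact mul_le_of_le_one_left (norm_nonneg _) t.2.2
  exact ⟨{ toFun := fun q => ⟨_, hne q⟩
           map_zero_left := fun a => Subtype.ext (by simp)
           map_one_left := fun a => Subtype.ext (by simp) }⟩

variable {E F : Type*} [NormedAddCommGroup E] [NormedSpace ℝ E] [NormedAddCommGroup F]
  {f : E → F}

theorem nullhomotopic_of_extends_to_closedBall (hf : ContinuousOn f (closedBall 0 1))
    (hne : ∀ x ∈ closedBall 0 1, f x ≠ 0) {g : C(sphere (0 : E) 1, {w : F // w ≠ 0})}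
    (hg : ∀ s, (g s : F) = f s) : g.Nullhomotopic := by
  have := contractibleSpace_closedBall E
  let fBall : C(closedBall (0 : E) 1, {w : F // w ≠ 0}) :=
    ⟨fun x => ⟨f x, hne x x.2⟩, hf.domRestrict.subtype_mk _⟩
  convert nullhomotopic_of_factorsThrough fBall
    ⟨inclusion sphere_subset_closedBall, continuous_inclusion _⟩ using 1
  ext s
  exact hg s

-- The homotopy `f ((1 - t / 2) s) - f (-(t / 2) s)` ends in an odd map.
theorem not_nullhomotopic_sub_center (hEF : OddMapsEssential E F)
    (hf : ContinuousOn f (closedBall 0 1)) (hinj : InjOn f (closedBall 0 1))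
    {g : C(sphere (0 : E) 1, {w : F // w ≠ 0})} (hg : ∀ s, (g s : F) = f s - f 0) :
    ¬ g.Nullhomotopic := by
  have mem_ball : ∀ (s : sphere (0 : E) 1) {c : ℝ}, |c| ≤ 1 → c • (s : E) ∈ closedBall 0 1 := by
    intro s c hc
    simpa [norm_smul] using hc
  have hfc : ∀ c : C(I, ℝ), (∀ t, |c t| ≤ 1) →
      Continuous fun q : I × sphere (0 : E) 1 => f (c q.1 • (q.2 : E)) := fun c hc =>
    hf.comp_continuous (by fun_prop) fun q => mem_ball q.2 (hc q.1)
  let c₁ : C(I, ℝ) := ⟨fun t => 1 - t / 2, by fun_prop⟩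
  let c₂ : C(I, ℝ) := ⟨fun t => -(t / 2), by fun_prop⟩
  have hc₁ : ∀ t, |c₁ t| ≤ 1 := fun t => abs_le.2 <| by
    change -1 ≤ 1 - (t : ℝ) / 2 ∧ 1 - (t : ℝ) / 2 ≤ 1
    constructor <;> linarith [t.2.1, t.2.2]
  have hc₂ : ∀ t, |c₂ t| ≤ 1 := fun t => abs_le.2 <| by
    change -1 ≤ -((t : ℝ) / 2) ∧ -((t : ℝ) / 2) ≤ 1
    constructor <;> linarith [t.2.1, t.2.2]
  have hne : ∀ q : I × sphere (0 : E) 1, f (c₁ q.1 • (q.2 : E)) - f (c₂ q.1 • (q.2 : E)) ≠ 0 := by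
    rintro ⟨t, s⟩ h
    have heq : c₁ t = c₂ t := smul_left_injective ℝ (ne_zero_of_mem_unit_sphere s)
      (hinj (mem_ball s (hc₁ t)) (mem_ball s (hc₂ t)) (sub_eq_zero.1 h))
    simp [c₁, c₂, sub_eq_add_neg] at heq
  let H : C(I × sphere (0 : E) 1, {w : F // w ≠ 0}) :=
    ⟨fun q => ⟨_, hne q⟩, ((hfc c₁ hc₁).sub (hfc c₂ hc₂)).subtype_mk _⟩
  let g₁ : C(sphere (0 : E) 1, {w : F // w ≠ 0}) := H.comp (.prodMk (.const _ 1) (.id _))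
  have hg₁ : g.Homotopic g₁ :=
    ⟨{ H with
       map_zero_left := fun s => Subtype.ext (by simp [H, c₁, c₂, hg])
       map_one_left := fun s => rfl }⟩
  have hodd : ∀ s, (g₁ (-s) : F) = -g₁ s := by
    have half : (1 : ℝ) - 2⁻¹ = 2⁻¹ := by norm_num
    intro s
    simp [g₁, H, c₁, c₂, half]
  rintro ⟨y, hy⟩
  exact hEF g₁ hodd ⟨y, hg₁.symm.trans hy⟩

theorem image_closedBall_mem_nhds [NormedSpace ℝ F] [ProperSpace E] (hEF : OddMapsEssential E F)
    (hf : ContinuousOn f (closedBall 0 1)) (hinj : InjOn f (closedBall 0 1)) :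
    f '' closedBall 0 1 ∈ 𝓝 (f 0) := by
  have hfs : Continuous fun s : sphere (0 : E) 1 => f s :=
    hf.comp_continuous continuous_subtype_val fun s => sphere_subset_closedBall s.2
  have hf0 : ∀ s : sphere (0 : E) 1, f s - f 0 ≠ 0 := fun s h =>
    ne_zero_of_mem_unit_sphere s
      (hinj (sphere_subset_closedBall s.2) (by simp) (sub_eq_zero.1 h))
  have hclose : ∀ᶠ p in 𝓝 (f 0), ∀ s ∈ (univ : Set (sphere (0 : E) 1)),
      ‖p - f 0‖ < ‖f s - f 0‖ := by
    refine isCompact_univ.eventually_forall_of_forall_eventually fun s _ => ?_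
    have hlhs : Continuous fun q : F × sphere (0 : E) 1 => ‖q.1 - f 0‖ := by fun_prop
    have hrhs : Continuous fun q : F × sphere (0 : E) 1 => ‖f q.2 - f 0‖ :=
      ((hfs.comp continuous_snd).sub continuous_const).norm
    refine hlhs.continuousAt.eventually_lt hrhs.continuousAt ?_
    simpa using hf0 s
  filter_upwards [hclose] with p hp
  by_contra hpf
  have hfp : ∀ x ∈ closedBall 0 1, f x - p ≠ 0 := fun x hx h => hpf ⟨x, hx, sub_eq_zero.1 h⟩
  let g₀ : C(sphere (0 : E) 1, {w : F // w ≠ 0}) := ⟨fun s => ⟨f s - f 0, hf0 s⟩,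
    (hfs.sub continuous_const).subtype_mk _⟩
  let g₁ : C(sphere (0 : E) 1, {w : F // w ≠ 0}) :=
    ⟨fun s => ⟨f s - p, hfp s (sphere_subset_closedBall s.2)⟩,
      (hfs.sub continuous_const).subtype_mk _⟩
  have hg : g₀.Homotopic g₁ := homotopic_of_norm_sub_lt fun s => by
    simpa [g₀, g₁, norm_sub_rev] using hp s trivial
  obtain ⟨y, hy⟩ := nullhomotopic_of_extends_to_closedBall (hf.sub continuousOn_const) hfp
    (g := g₁) fun _ => rfl
  exact not_nullhomotopic_sub_center hEF hf hinj (fun _ => rfl) ⟨y, hg.trans hy⟩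

theorem image_mem_nhds_of_injOn [NormedSpace ℝ F] [ProperSpace E] (hEF : OddMapsEssential E F)
    {W : Set E} {a : E} (hW : W ∈ 𝓝 a) (hf : ContinuousOn f W) (hinj : InjOn f W) :
    f '' W ∈ 𝓝 (f a) := by
  obtain ⟨r, hr, hball⟩ := Metric.nhds_basis_closedBall.mem_iff.1 hW
  have hmaps : MapsTo (fun x : E => a + r • x) (closedBall 0 1) W := by
    intro x hx
    refine hball ?_
    rw [mem_closedBall_zero_iff] at hx
    rw [mem_closedBall_iff_norm, add_sub_cancel_left, norm_smul, Real.norm_of_nonneg hr.le]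
    exact mul_le_of_le_one_right hr.le hx
  have h := image_closedBall_mem_nhds (f := fun x => f (a + r • x)) hEF
    (hf.comp (by fun_prop) hmaps)
    (hinj.comp ((add_right_injective a).comp (smul_right_injective _ hr.ne')).injOn hmaps)
  rw [smul_zero, add_zero] at h
  exact mem_of_superset h (image_subset_iff.2 fun x hx => mem_image_of_mem f (hmaps hx))

end InvarianceOfDomain

section InvarianceOfInterior

variable {E F M N A : Type*} [NormedAddCommGroup E] [NormedSpace ℝ E] [ProperSpace E]
  [NormedAddCommGroup F] [NormedSpace ℝ F] [TopologicalSpace M] [ChartedSpace E M]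
  [TopologicalSpace N] [ChartedSpace F N] [TopologicalSpace A]

theorem image_mem_nhds_of_injOn_of_chartedSpace (hEF : OddMapsEssential E F) {f : M → N}
    {W : Set M} {a : M} (hW : W ∈ 𝓝 a) (hf : ContinuousOn f W) (hinj : InjOn f W) :
    f '' W ∈ 𝓝 (f a) := by
  let φ := chartAt E a
  let ψ := chartAt F (f a)
  have ha : a ∈ φ.source := mem_chart_source E a
  have hfa : f a ∈ ψ.source := mem_chart_source F (f a)
  let V : Set M := W ∩ φ.source ∩ f ⁻¹' ψ.source
  have hV : V ∈ 𝓝 a := inter_mem (inter_mem hW (φ.open_source.mem_nhds ha))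
    (hf.continuousAt hW (ψ.open_source.mem_nhds hfa))
  have hVinv : ∀ x ∈ V, φ.symm (φ x) = x := fun x hx => φ.left_inv hx.1.2
  have hmaps : MapsTo φ.symm (φ '' V) V := by
    rintro _ ⟨x, hx, rfl⟩
    rwa [hVinv x hx]
  have himage : (ψ ∘ f ∘ φ.symm) '' (φ '' V) = ψ '' (f '' V) := by
    simp only [image_comp, (LeftInvOn.image_image (f := φ) (f' := φ.symm) hVinv)]
  have hVsub : V ⊆ W := fun x hx => hx.1.1
  have hcont : ContinuousOn (ψ ∘ f ∘ φ.symm) (φ '' V) :=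
    ψ.continuousOn.comp ((hf.mono hVsub).comp
      (φ.continuousOn_symm.mono (image_subset_iff.2 fun x hx => φ.map_source hx.1.2)) hmaps)
      fun y hy => (hmaps hy).2
  have hinjOn : InjOn (ψ ∘ f ∘ φ.symm) (φ '' V) :=
    ψ.injOn.comp ((hinj.mono hVsub).comp
      (φ.symm.injOn.mono (image_subset_iff.2 fun x hx => φ.map_source hx.1.2)) hmaps)
      fun y hy => (hmaps hy).2
  have hnhds := image_mem_nhds_of_injOn hEF (φ.image_mem_nhds ha hV) hcont hinjOn
  rw [himage, comp_apply, comp_apply, φ.left_inv ha, ← ψ.map_nhds_eq hfa, mem_map] at hnhds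
  refine mem_of_superset (inter_mem hnhds (ψ.open_source.mem_nhds hfa)) ?_
  rw [ψ.injOn.preimage_image_inter (image_subset_iff.2 fun x hx => hx.2)]
  exact image_mono hVsub

theorem image_mem_nhds_of_isEmbedding (hEF : OddMapsEssential E F) {ι : A → M}
    (hι : IsEmbedding ι) {κ : A → N} {U : Set A} {a : A} (ha : ι a ∈ interior (range ι))
    (hU : U ∈ 𝓝 a) (hκ : ContinuousOn κ U) (hinj : InjOn κ U) : κ '' U ∈ 𝓝 (κ a) := by
  have : Nonempty A := ⟨a⟩
  have hinv : LeftInverse (invFun ι) ι := leftInverse_invFun hι.injective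
  have hmaps : MapsTo (invFun ι) (ι '' U) U := by
    rintro _ ⟨x, hx, rfl⟩
    rwa [hinv x]
  have hinvc : ContinuousOn (invFun ι) (ι '' U) :=
    hι.isInducing.continuousOn_iff.2
      (continuousOn_id.congr fun _ hy => invFun_eq (image_subset_range _ _ hy))
  have hinvi : InjOn (invFun ι) (ι '' U) := by
    rintro _ ⟨x, _, rfl⟩ _ ⟨y, _, rfl⟩ h
    rw [hinv x, hinv y] at h
    rw [h]
  have hιU : ι '' U ∈ 𝓝 (ι a) := by
    rw [← hι.isInducing.map_nhds_of_mem a (mem_interior_iff_mem_nhds.1 ha)]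
    exact image_mem_map hU
  have h := image_mem_nhds_of_injOn_of_chartedSpace hEF hιU (hκ.comp hinvc hmaps)
    (hinj.comp hinvi hmaps)
  rwa [image_comp, hinv.image_image, comp_apply, hinv a] at h

theorem preimage_interior_range_subset (hEF : OddMapsEssential E F) {ι : A → M} {κ : A → N}
    (hι : IsEmbedding ι) (hκ : IsEmbedding κ) :
    ι ⁻¹' interior (range ι) ⊆ κ ⁻¹' interior (range κ) := fun _ ha =>
  mem_interior_iff_mem_nhds.2 <| image_univ ▸
    image_mem_nhds_of_isEmbedding hEF hι ha univ_mem hκ.continuous.continuousOn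
      hκ.injective.injOn

end InvarianceOfInterior

section Cylinder

instance : ChartedSpace ℝ Circle :=
  isLocalHomeomorph_circleExp.chartedSpace Circle.exp_surjective

instance : ChartedSpace (ℂ × ℝ) (ℂ × Circle) :=
  inferInstanceAs (ChartedSpace (ModelProd ℂ ℝ) (ℂ × Circle))

instance : CompactSpace Disc2 := isCompact_iff_compactSpace.1 (isCompact_closedBall 0 1)

instance : ContractibleSpace Disc2 := contractibleSpace_closedBall ℂ

theorem interior_disc2_prod_univ {A : Type*} [TopologicalSpace A] :
    interior (Disc2 ×ˢ (univ : Set A)) = {q | ‖q.1‖ < 1} := by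
  rw [interior_prod_eq, interior_closedBall _ one_ne_zero, interior_univ]
  ext q
  simp only [mem_prod, mem_ball_zero_iff, mem_univ, and_true, mem_ofPred_eq]

theorem norm_lt_one_of_isEmbedding {φ : Disc2 → Disc2} (hφ : IsEmbedding φ) {w : Disc2}
    (hw : ‖(w : ℂ)‖ < 1) : ‖(φ w : ℂ)‖ < 1 := by
  have hball : interior Disc2 = ball (0 : ℂ) 1 := interior_closedBall 0 one_ne_zero
  have hw' : (w : ℂ) ∈ interior (range ((↑) : Disc2 → ℂ)) := by
    rwa [Subtype.range_coe, hball, mem_ball_zero_iff]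
  have h := preimage_interior_range_subset oddMapsEssential_complex IsEmbedding.subtypeVal
    (IsEmbedding.subtypeVal.comp hφ) hw'
  rw [← mem_ball_zero_iff, ← hball]
  exact interior_mono (range_subset_iff.2 fun v => (φ v).2) h

theorem isEmbedding_coe_cylinder : IsEmbedding (Prod.map (↑) (↑) : Disc2 × I → ℂ × ℝ) :=
  IsEmbedding.subtypeVal.prodMap IsEmbedding.subtypeVal

theorem interior_range_coe_cylinder :
    interior (range (Prod.map (↑) (↑) : Disc2 × I → ℂ × ℝ)) = ball 0 1 ×ˢ Ioo 0 1 := by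
  rw [range_prodMap, Subtype.range_coe, Subtype.range_coe, interior_prod_eq,
    interior_closedBall _ one_ne_zero, interior_Icc]

variable {M : Type*} [TopologicalSpace M] [ChartedSpace (ℂ × ℝ) M] {κ : Disc2 × I → M}

theorem mem_interior_range_iff (hκ : IsEmbedding κ) {p : Disc2 × I} :
    κ p ∈ interior (range κ) ↔ ‖(p.1 : ℂ)‖ < 1 ∧ p.2 ≠ 0 ∧ p.2 ≠ 1 := by
  have h : κ p ∈ interior (range κ) ↔ ((p.1 : ℂ), (p.2 : ℝ)) ∈ ball (0 : ℂ) 1 ×ˢ Ioo (0 : ℝ) 1 := by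
    rw [← interior_range_coe_cylinder]
    exact ⟨fun h => preimage_interior_range_subset oddMapsEssential_complex_prod_real hκ
        isEmbedding_coe_cylinder h,
      fun h => preimage_interior_range_subset oddMapsEssential_complex_prod_real
        isEmbedding_coe_cylinder hκ h⟩
  rw [h, mem_prod, mem_ball_zero_iff, ← unitInterval.pos_iff_ne_zero,
    ← unitInterval.lt_one_iff_ne_one]
  rfl

theorem range_subset_closure_interior_range (hκ : IsEmbedding κ) :
    range κ ⊆ closure (interior (range κ)) := by
  let ι : Disc2 × I → ℂ × ℝ := Prod.map (↑) (↑)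
  have hdense : Dense (ι ⁻¹' interior (range ι)) := by
    refine isEmbedding_coe_cylinder.isInducing.dense_iff.2 fun p => ?_
    rw [image_preimage_eq_of_subset interior_subset, interior_range_coe_cylinder, closure_prod_eq,
      closure_ball _ one_ne_zero, closure_Ioo zero_ne_one]
    exact ⟨p.1.2, p.2.2⟩
  exact (hκ.continuous.range_subset_closure_image_dense hdense).trans <| closure_mono <|
    image_subset_iff.2 <| preimage_interior_range_subset oddMapsEssential_complex_prod_real
      isEmbedding_coe_cylinder hκ

theorem interior_image_bot_eq_empty (hκ : IsEmbedding κ) :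
    interior (κ '' {p | p.2 = 0}) = ∅ := by
  refine eq_empty_of_forall_notMem fun x hx => ?_
  obtain ⟨p, hp, rfl⟩ := interior_subset hx
  exact ((mem_interior_range_iff hκ).1 (interior_mono (image_subset_range _ _) hx)).2.1 hp

end Cylinder

section Stack

variable {A N : Type*}

/-- The map on `A × ℝ` which is `κ₁` on `A × [0, 1]` and `κ₂`, moved down by one unit, on
`A × [-1, 0)`; it is continuous when the top of `κ₂` is the bottom of `κ₁`. Outside of
`A × [-1, 1]` it is extended by projecting to this interval. -/
def stack (κ₁ κ₂ : A × I → N) (q : A × ℝ) : N :=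
  if 0 ≤ q.2 then κ₁ (q.1, projIcc 0 1 zero_le_one q.2)
  else κ₂ (q.1, projIcc 0 1 zero_le_one (q.2 + 1))

variable {κ₁ κ₂ : A × I → N}

theorem stack_zero (a : A) : stack κ₁ κ₂ (a, 0) = κ₁ (a, 0) := by
  simp only [stack, le_refl, if_true, projIcc_left]
  rfl

theorem range_stack_subset : range (stack κ₁ κ₂) ⊆ range κ₁ ∪ range κ₂ := by
  rintro _ ⟨q, rfl⟩
  by_cases hq : 0 ≤ q.2
  · exact .inl ⟨_, (if_pos hq).symm⟩
  · exact .inr ⟨_, (if_neg hq).symm⟩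

theorem continuous_stack [TopologicalSpace A] [TopologicalSpace N] (h₁ : Continuous κ₁)
    (h₂ : Continuous κ₂) (hface : ∀ a, κ₂ (a, 1) = κ₁ (a, 0)) : Continuous (stack κ₁ κ₂) := by
  refine Continuous.if_le ?_ ?_ continuous_const continuous_snd ?_
  · exact h₁.comp (by fun_prop)
  · exact h₂.comp (by fun_prop)
  · intro q hq
    rw [← hq, zero_add, projIcc_left, projIcc_right]
    exact (hface _).symm

theorem injOn_stack (h₁ : Injective κ₁) (h₂ : Injective κ₂)
    (hface : ∀ a, κ₂ (a, 1) = κ₁ (a, 0)) {O : Set N}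
    (hO : ∀ p q, κ₁ p = κ₂ q → κ₁ p ∈ O → p.2 = 0) :
    InjOn (stack κ₁ κ₂) (univ ×ˢ Ioo (-1) 1 ∩ stack κ₁ κ₂ ⁻¹' O) := by
  have hproj : InjOn (projIcc (0 : ℝ) 1 zero_le_one) (Icc 0 1) := fun s hs t ht h => by
    simpa [projIcc_of_mem, hs, ht] using h
  have hmixed : ∀ q ∈ univ ×ˢ Ioo (-1) 1 ∩ stack κ₁ κ₂ ⁻¹' O, ∀ q' ∈ univ ×ˢ Ioo (-1 : ℝ) 1,
      0 ≤ q.2 → ¬ 0 ≤ q'.2 → stack κ₁ κ₂ q ≠ stack κ₁ κ₂ q' := by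
    intro q ⟨_, hqO⟩ q' hq' hpos hneg heq
    rw [mem_preimage] at hqO
    simp only [stack, if_pos hpos, if_neg hneg] at heq hqO
    have hzero : projIcc 0 1 zero_le_one q.2 = (0 : I) := hO _ _ heq hqO
    rw [hzero, ← hface] at heq
    have hone := congrArg Subtype.val (Prod.ext_iff.1 (h₂ heq)).2
    rw [projIcc_of_mem _ ⟨by linarith [hq'.2.1], by linarith⟩] at hone
    simp only [Icc.coe_one] at hone
    linarith
  intro q hq q' hq' heq
  by_cases h : 0 ≤ q.2 <;> by_cases h' : 0 ≤ q'.2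
  · simp only [stack, if_pos h, if_pos h'] at heq
    obtain ⟨hfst, hsnd⟩ := Prod.ext_iff.1 (h₁ heq)
    exact Prod.ext hfst (hproj ⟨h, hq.1.2.2.le⟩ ⟨h', hq'.1.2.2.le⟩ hsnd)
  · exact absurd heq (hmixed q hq q' hq'.1 h h')
  · exact absurd heq.symm (hmixed q' hq' q hq.1 h' h)
  · simp only [stack, if_neg h, if_neg h'] at heq
    obtain ⟨hfst, hsnd⟩ := Prod.ext_iff.1 (h₂ heq)
    refine Prod.ext hfst (add_right_cancel (hproj ⟨?_, ?_⟩ ⟨?_, ?_⟩ hsnd)) <;>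
      linarith [hq.1.2.1, hq'.1.2.1]

theorem range_union_range_mem_nhds [TopologicalSpace N] [ChartedSpace (ℂ × ℝ) N]
    {κ₁ κ₂ : Disc2 × I → N} (h₁ : Continuous κ₁) (hinj₁ : Injective κ₁) (h₂ : Continuous κ₂)
    (hinj₂ : Injective κ₂) (hface : ∀ w, κ₂ (w, 1) = κ₁ (w, 0)) {w : Disc2}
    (hw : ‖(w : ℂ)‖ < 1) {O : Set N} (hO : O ∈ 𝓝 (κ₁ (w, 0)))
    (hmeet : ∀ p q, κ₁ p = κ₂ q → κ₁ p ∈ O → p.2 = 0) :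
    range κ₁ ∪ range κ₂ ∈ 𝓝 (κ₁ (w, 0)) := by
  have hcont := continuous_stack h₁ h₂ hface
  have hι : IsEmbedding (Prod.map (↑) id : Disc2 × ℝ → ℂ × ℝ) :=
    IsEmbedding.subtypeVal.prodMap IsEmbedding.id
  have hmem : Prod.map (↑) id (w, (0 : ℝ)) ∈
      interior (range (Prod.map (↑) id : Disc2 × ℝ → ℂ × ℝ)) := by
    rwa [range_prodMap, Subtype.range_coe, range_id, interior_disc2_prod_univ]
  rw [← stack_zero (κ₁ := κ₁) (κ₂ := κ₂) w] at hO ⊢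
  have hU : univ ×ˢ Ioo (-1) 1 ∩ stack κ₁ κ₂ ⁻¹' O ∈ 𝓝 (w, (0 : ℝ)) :=
    inter_mem (prod_mem_nhds univ_mem (Ioo_mem_nhds (by simp) one_pos)) (hcont.continuousAt hO)
  exact mem_of_superset (image_mem_nhds_of_isEmbedding oddMapsEssential_complex_prod_real hι hmem
    hU hcont.continuousOn (injOn_stack hinj₁ hinj₂ hface hmeet))
    ((image_subset_range _ _).trans range_stack_subset)

end Stack

section Topology

variable {A B C : Type*} [TopologicalSpace A] [TopologicalSpace B] [TopologicalSpace C]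

theorem exists_isEmbedding_comp_eq {f : A → C} {g : B → C} (hf : IsEmbedding f)
    (hg : IsEmbedding g) (h : range f ⊆ range g) :
    ∃ φ : A → B, IsEmbedding φ ∧ ∀ a, g (φ a) = f a := by
  choose φ hφ using fun a => h (mem_range_self a)
  have hcomp : g ∘ φ = f := funext hφ
  exact ⟨φ, (hg.of_comp_iff).1 (hcomp ▸ hf), hφ⟩

theorem mem_nhds_of_iUnion_mem_nhds {κ : Type*} [Finite κ] {Z : κ → Set A}
    (hZ : ∀ i, IsClosed (Z i)) {a : A} (ha : ⋃ i, Z i ∈ 𝓝 a) {i : κ}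
    (hi : ∀ j ≠ i, a ∉ Z j) : Z i ∈ 𝓝 a := by
  have haway : ∀ᶠ x in 𝓝 a, ∀ j, j ≠ i → x ∉ Z j :=
    eventually_all.2 fun j => eventually_imp_distrib_left.2 fun hj =>
      (hZ j).isOpen_compl.mem_nhds (hi j hj)
  filter_upwards [ha, haway] with x hx hxj
  obtain ⟨j, hj⟩ := mem_iUnion.1 hx
  by_cases hji : j = i
  · exact hji ▸ hj
  · exact absurd hj (hxj j hji)

theorem interior_iUnion_eq_empty [BaireSpace A] {κ : Type*} [Countable κ] {Z : κ → Set A}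
    (hZ : ∀ i, IsClosed (Z i)) (hint : ∀ i, interior (Z i) = ∅) :
    interior (⋃ i, Z i) = ∅ := by
  rw [interior_eq_empty_iff_dense_compl, compl_iUnion]
  exact dense_iInter_of_isOpen (fun i => (hZ i).isOpen_compl)
    fun i => interior_eq_empty_iff_dense_compl.1 (hint i)

theorem exists_eq_univ_of_iUnion_eq_univ [ConnectedSpace A] {κ : Type*} [Finite κ]
    {Z : κ → Set A} (hZ : ∀ i, IsClosed (Z i)) (hdisj : Pairwise (Disjoint on Z))
    (hcover : ⋃ i, Z i = univ) : ∃ i, Z i = univ := by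
  obtain ⟨a⟩ : Nonempty A := inferInstance
  obtain ⟨i, hi⟩ := mem_iUnion.1 (hcover.symm ▸ mem_univ a)
  have hopen : IsOpen (Z i) := isOpen_iff_mem_nhds.2 fun x hx =>
    mem_nhds_of_iUnion_mem_nhds hZ (hcover.symm ▸ univ_mem) fun j hj hxj =>
      disjoint_left.1 (hdisj hj) hxj hx
  exact ⟨i, (isClopen_iff.1 ⟨hZ i, hopen⟩).resolve_left (nonempty_of_mem hi).ne_empty⟩

end Topology

section NullHomotopicIn

variable {Z A B : Set X}

theorem NullHomotopicIn.mono (h : NullHomotopicIn A Z) (hZB : Z ⊆ B) : NullHomotopicIn A B := by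
  obtain ⟨hAZ, h⟩ := h
  exact ⟨hAZ.trans hZB, ContinuousMap.Nullhomotopic.comp_right h
    ⟨inclusion hZB, continuous_inclusion hZB⟩⟩

theorem nullHomotopicIn_image_range [T2Space Z] {γ : C(Circle, Z)} (hinj : Injective γ)
    (hγ : γ.Nullhomotopic) : NullHomotopicIn ((↑) '' range γ) Z := by
  have hemb : IsEmbedding (fun s => (γ s : X)) :=
    IsEmbedding.subtypeVal.comp (γ.continuous.isClosedEmbedding hinj).isEmbedding
  refine ⟨Subtype.coe_image_subset _ _, ?_⟩
  have hmem : ∀ x : ((↑) '' range γ : Set X), (x : X) ∈ range fun s => (γ s : X) := by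
    rintro ⟨_, _, ⟨s, rfl⟩, rfl⟩
    exact ⟨s, rfl⟩
  obtain ⟨φ, hφ, hφγ⟩ := exists_isEmbedding_comp_eq IsEmbedding.subtypeVal hemb
    (range_subset_iff.2 hmem)
  have hcomp : γ.comp ⟨φ, hφ.continuous⟩ =
      ⟨inclusion (Subtype.coe_image_subset _ _), continuous_inclusion _⟩ :=
    ContinuousMap.ext fun x => Subtype.ext (hφγ x)
  exact hcomp ▸ hγ.comp_left ⟨φ, hφ.continuous⟩

theorem NullHomotopicIn.of_isotopicCirclesIn [T2Space Z] (hA : NullHomotopicIn A Z)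
    (h : IsotopicCirclesIn Z A B) : NullHomotopicIn B Z := by
  obtain ⟨H, hinj, hmem, rfl, rfl⟩ := h
  obtain ⟨hAZ, hnull⟩ := hA
  let γ : I → C(Circle, Z) := fun t => ⟨fun s => ⟨H (s, t), hmem s t⟩, by fun_prop⟩
  have hγ₀ : (γ 0).Nullhomotopic := ContinuousMap.Nullhomotopic.comp_left hnull
    ⟨fun s => ⟨H (s, 0), mem_range_self s⟩, by fun_prop⟩
  have hγ : (γ 0).Homotopic (γ 1) :=
    ⟨{ toFun := fun q => ⟨H (q.2, q.1), hmem q.2 q.1⟩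
       map_zero_left := fun _ => rfl
       map_one_left := fun _ => rfl }⟩
  obtain ⟨y, hy⟩ := hγ₀
  have hinj₁ : Injective (γ 1) := fun s s' hs => hinj 1 (congrArg Subtype.val hs)
  have himage : ((↑) '' range (γ 1) : Set X) = range fun s => H (s, 1) :=
    (range_comp _ _).symm
  exact himage ▸ nullHomotopicIn_image_range hinj₁ ⟨y, hγ.symm.trans hy⟩

end NullHomotopicIn

namespace SolidTorus

variable (T : SolidTorus X)

/-- The coordinates in `ℂ × S¹` of a point of a solid torus. The ambient space carries no
separation axiom, so the subsets of the torus are studied through their images under `T.coord`. -/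
def coord (x : T.carrier) : ℂ × Circle := ((T.homeo x).1, (T.homeo x).2)

theorem isEmbedding_coord : IsEmbedding T.coord :=
  (IsEmbedding.subtypeVal.prodMap IsEmbedding.id).comp T.homeo.isEmbedding

instance : T2Space T.carrier := T.isEmbedding_coord.t2Space

theorem coe_mem_bdry_iff {x : T.carrier} : (x : X) ∈ T.bdry ↔ ‖(T.coord x).1‖ = 1 :=
  Subtype.val_injective.mem_set_image

theorem bdry_subset : T.bdry ⊆ T.carrier := Subtype.coe_image_subset _ _

theorem not_nullHomotopicIn_meridianCurve : ¬ NullHomotopicIn T.meridianCurve T.bdry := by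
  rintro ⟨hsub, hnull⟩
  have hone : ∀ s : sphere (0 : ℂ) 1, ‖(s : ℂ)‖ = 1 := fun s => mem_sphere_zero_iff_norm.1 s.2
  let point : sphere (0 : ℂ) 1 → T.carrier := fun s =>
    T.homeo.symm (⟨s, sphere_subset_closedBall s.2⟩, 1)
  have hpoint : ∀ s, T.homeo (point s) = (⟨s, sphere_subset_closedBall s.2⟩, 1) := fun s =>
    T.homeo.apply_symm_apply _
  have hmem : ∀ s, (point s : X) ∈ T.meridianCurve := fun s =>
    ⟨point s, by simp [hpoint, hone], rfl⟩
  let circle : C(sphere (0 : ℂ) 1, T.meridianCurve) := ⟨fun s => ⟨point s, hmem s⟩, by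
    have : Continuous point := T.homeo.symm.continuous.comp (by fun_prop)
    fun_prop⟩
  let proj : T.bdry → ℂ := fun x => (T.coord (inclusion T.bdry_subset x)).1
  have hproj : Continuous proj := continuous_fst.comp
    (T.isEmbedding_coord.continuous.comp (continuous_inclusion T.bdry_subset))
  have hproj_ne : ∀ x, proj x ≠ 0 := fun x h => by
    have := (T.coe_mem_bdry_iff (x := inclusion T.bdry_subset x)).1 x.2
    simp_all [proj]
  have hproj_circle : ∀ s, proj (inclusion hsub (circle s)) = s := fun s => by
    change ((T.homeo (point s)).1 : ℂ) = s
    rw [hpoint]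
  refine oddMapsEssential_complex _ (fun s => ?_)
    ((ContinuousMap.Nullhomotopic.comp_left hnull circle).comp_right
      (⟨fun x => ⟨proj x, hproj_ne x⟩, hproj.subtype_mk _⟩ : C(T.bdry, {w : ℂ // w ≠ 0})))
  exact (hproj_circle (-s)).trans (congrArg Neg.neg (hproj_circle s).symm)

end SolidTorus

theorem MeridionalDisc.not_nullHomotopicIn {T : SolidTorus X} (K : MeridionalDisc T) {A : Set X}
    (hA : A ⊆ T.bdry) : ¬ NullHomotopicIn K.bdry A := fun h =>
  have : T2Space T.bdry := (IsEmbedding.inclusion T.bdry_subset).t2Space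
  T.not_nullHomotopicIn_meridianCurve ((h.mono hA).of_isotopicCirclesIn K.isotopic_meridian)

namespace SolidTorus

variable (T : SolidTorus X) {B B' : Set X} {P : Type*} [TopologicalSpace P]

/-- The image in `ℂ × S¹` of the part of `B` lying in the solid torus. -/
def coordImage (B : Set X) : Set (ℂ × Circle) := T.coord '' (Subtype.val ⁻¹' B)

theorem norm_coord_le_one (x : T.carrier) : ‖(T.coord x).1‖ ≤ 1 :=
  mem_closedBall_zero_iff.1 (T.homeo x).1.2

variable {T}

theorem coord_mem_coordImage {x : T.carrier} : T.coord x ∈ T.coordImage B ↔ (x : X) ∈ B :=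
  T.isEmbedding_coord.injective.mem_set_image

theorem coordImage_mono (h : B ⊆ B') : T.coordImage B ⊆ T.coordImage B' :=
  image_mono (preimage_mono h)

theorem coordImage_inter : T.coordImage (B ∩ B') = T.coordImage B ∩ T.coordImage B' :=
  image_inter T.isEmbedding_coord.injective

theorem coordImage_iUnion {κ : Type*} (B : κ → Set X) :
    T.coordImage (⋃ i, B i) = ⋃ i, T.coordImage (B i) := by
  simp only [coordImage, preimage_iUnion, image_iUnion]

theorem disjoint_coordImage (h : Disjoint B B') :
    Disjoint (T.coordImage B) (T.coordImage B') :=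
  disjoint_image_of_injective T.isEmbedding_coord.injective (h.preimage _)

theorem coordImage_carrier : T.coordImage T.carrier = Disc2 ×ˢ univ := by
  refine Subset.antisymm ?_ fun q hq => ?_
  · rintro _ ⟨x, -, rfl⟩
    exact ⟨(T.homeo x).1.2, mem_univ _⟩
  · refine ⟨T.homeo.symm (⟨q.1, hq.1⟩, q.2), Subtype.coe_prop _, ?_⟩
    simp only [coord, T.homeo.apply_symm_apply]

/-- The parametrization, in the coordinates of the solid torus, of a subset of it by a model
space. -/
def param (hB : B ⊆ T.carrier) (e : B ≃ₜ P) (p : P) : ℂ × Circle :=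
  T.coord (inclusion hB (e.symm p))

theorem isEmbedding_param (hB : B ⊆ T.carrier) (e : B ≃ₜ P) : IsEmbedding (T.param hB e) :=
  T.isEmbedding_coord.comp ((IsEmbedding.inclusion hB).comp e.symm.isEmbedding)

theorem param_mem_coordImage (hB : B ⊆ T.carrier) (e : B ≃ₜ P) {p : P} :
    T.param hB e p ∈ T.coordImage B' ↔ (e.symm p : X) ∈ B' :=
  coord_mem_coordImage

theorem image_param (hB : B ⊆ T.carrier) (e : B ≃ₜ P) (A : Set P) :
    T.param hB e '' A = T.coordImage (Subtype.val '' (e ⁻¹' A)) := by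
  refine Subset.antisymm ?_ ?_
  · rintro _ ⟨p, hp, rfl⟩
    exact (param_mem_coordImage hB e).2 ⟨_, by simpa using hp, rfl⟩
  · rintro _ ⟨x, ⟨b, hb, hbx⟩, rfl⟩
    refine ⟨e b, hb, congrArg T.coord (Subtype.ext ?_)⟩
    simpa only [e.symm_apply_apply] using hbx

theorem range_param (hB : B ⊆ T.carrier) (e : B ≃ₜ P) :
    range (T.param hB e) = T.coordImage B := by
  rw [← image_univ, image_param, preimage_univ, image_univ, Subtype.range_coe]

end SolidTorus

namespace MeridionalDisc

variable {T : SolidTorus X} (K : MeridionalDisc T)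

theorem coe_mem_bdry_iff {x : K.carrier} : (x : X) ∈ K.bdry ↔ ‖(K.homeo x : ℂ)‖ = 1 := by
  rw [K.bdry_spec]
  exact Subtype.val_injective.mem_set_image

theorem norm_param_eq_one_iff {v : Disc2} :
    ‖(T.param K.subset K.homeo v).1‖ = 1 ↔ ‖(v : ℂ)‖ = 1 := by
  have hmem : (K.homeo.symm v : X) ∈ T.bdry ↔ (K.homeo.symm v : X) ∈ K.bdry := by
    rw [← K.inter_bdry, mem_inter_iff, and_iff_right (K.homeo.symm v).2]
  rw [K.coe_mem_bdry_iff, K.homeo.apply_symm_apply] at hmem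
  exact T.coe_mem_bdry_iff.symm.trans hmem

end MeridionalDisc

namespace Chamber

variable {C : Chamber X} {x : C.carrier}

theorem coe_mem_top_iff : (x : X) ∈ C.top ↔ (C.homeo x).2 = 1 :=
  Subtype.val_injective.mem_set_image

theorem coe_mem_bot_iff : (x : X) ∈ C.bot ↔ (C.homeo x).2 = 0 :=
  Subtype.val_injective.mem_set_image

theorem coe_mem_bdry_iff :
    (x : X) ∈ C.bdry ↔ ‖((C.homeo x).1 : ℂ)‖ = 1 ∨ (C.homeo x).2 = 0 ∨ (C.homeo x).2 = 1 :=
  Subtype.val_injective.mem_set_image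

theorem bdry_subset : C.bdry ⊆ C.carrier := Subtype.coe_image_subset _ _

end Chamber

namespace ChamberSystem

variable {T : SolidTorus X} {m : ℕ} (S : ChamberSystem T m)

/-- The parametrization of the `i`-th chamber by the standard cylinder, in the coordinates of the
solid torus. -/
def cyl (i : Fin m) : Disc2 × I → ℂ × Circle := T.param (S.chamber_sub i) (S.chamber i).homeo

/-- The `k`-th disc of the system, in the coordinates of the solid torus. -/
def face (k : Fin m) : Set (ℂ × Circle) := T.coordImage (S.disc k).carrier

variable {i j k : Fin m} {p : Disc2 × I} {q : ℂ × Circle}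

theorem isEmbedding_cyl (i : Fin m) : IsEmbedding (S.cyl i) := SolidTorus.isEmbedding_param _ _

theorem range_cyl (i : Fin m) : range (S.cyl i) = T.coordImage (S.chamber i).carrier :=
  SolidTorus.range_param _ _

theorem isClosed_range_cyl (i : Fin m) : IsClosed (range (S.cyl i)) :=
  (isCompact_range (S.isEmbedding_cyl i).continuous).isClosed

theorem image_cyl_bot (i : Fin m) : S.cyl i '' {p | p.2 = 0} = S.face i :=
  (SolidTorus.image_param _ _ _).trans (congrArg T.coordImage (S.bot_eq i))

theorem image_cyl_top (i : Fin m) : S.cyl i '' {p | p.2 = 1} = S.face (finRotate m i) :=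
  (SolidTorus.image_param _ _ _).trans (congrArg T.coordImage (S.top_eq i))

theorem cyl_mem_face_iff : S.cyl i p ∈ S.face i ↔ p.2 = 0 := by
  rw [← S.image_cyl_bot]
  exact (S.isEmbedding_cyl i).injective.mem_set_image

theorem cyl_mem_face_finRotate_iff : S.cyl i p ∈ S.face (finRotate m i) ↔ p.2 = 1 := by
  rw [← S.image_cyl_top]
  exact (S.isEmbedding_cyl i).injective.mem_set_image

theorem range_cyl_zero (i : Fin m) : (range fun w => S.cyl i (w, 0)) = S.face i := by
  refine Subset.antisymm (range_subset_iff.2 fun w => S.cyl_mem_face_iff.2 rfl) ?_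
  rw [← S.image_cyl_bot]
  rintro _ ⟨⟨w, _⟩, rfl, rfl⟩
  exact mem_range_self w

theorem range_cyl_one (i : Fin m) :
    (range fun w => S.cyl i (w, 1)) = S.face (finRotate m i) := by
  refine Subset.antisymm (range_subset_iff.2 fun w => S.cyl_mem_face_finRotate_iff.2 rfl) ?_
  rw [← S.image_cyl_top]
  rintro _ ⟨⟨w, _⟩, rfl, rfl⟩
  exact mem_range_self w

theorem isEmbedding_cyl_prodMk (i : Fin m) (t : I) : IsEmbedding fun w => S.cyl i (w, t) :=
  (S.isEmbedding_cyl i).comp (isEmbedding_prodMkLeft t)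

theorem isClosed_face (k : Fin m) : IsClosed (S.face k) :=
  S.range_cyl_zero k ▸ (isCompact_range (S.isEmbedding_cyl_prodMk k 0).continuous).isClosed

theorem eq_of_mem_face (hi : q ∈ S.face i) (hj : q ∈ S.face j) : i = j := by
  by_contra hij
  exact disjoint_left.1 (SolidTorus.disjoint_coordImage (S.disc_disjoint hij)) hi hj

theorem finRotate_ne (S : ChamberSystem T m) (k : Fin m) : finRotate m k ≠ k := fun h => by
  have hbot : S.cyl k (0, 0) ∈ S.face k := S.cyl_mem_face_iff.2 rfl
  have htop : S.cyl k (0, 0) ∈ S.face (finRotate m k) := by rwa [h]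
  exact zero_ne_one (S.cyl_mem_face_finRotate_iff.1 htop)

theorem iUnion_range_cyl : ⋃ i, range (S.cyl i) = Disc2 ×ˢ univ := by
  simp only [S.range_cyl, ← SolidTorus.coordImage_iUnion, S.cover, SolidTorus.coordImage_carrier]

theorem range_cyl_inter_subset (hij : i ≠ j) :
    range (S.cyl i) ∩ range (S.cyl j) ⊆ ⋃ k, S.face k := by
  rw [S.range_cyl, S.range_cyl, ← SolidTorus.coordImage_inter]
  exact (SolidTorus.coordImage_mono (S.overlap i j hij)).trans
    (SolidTorus.coordImage_iUnion _).subset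

theorem interior_iUnion_face : interior (⋃ k, S.face k) = ∅ :=
  interior_iUnion_eq_empty S.isClosed_face fun k =>
    S.image_cyl_bot k ▸ interior_image_bot_eq_empty (S.isEmbedding_cyl k)

theorem eventually_mem_face_imp_eq (hq : q ∈ S.face k) :
    ∀ᶠ x in 𝓝 q, ∀ l, x ∈ S.face l → l = k := by
  refine eventually_all.2 fun l => ?_
  by_cases hl : l = k
  · exact .of_forall fun _ _ => hl
  · filter_upwards [(S.isClosed_face l).isOpen_compl.mem_nhds fun h => hl (S.eq_of_mem_face h hq)]
      with x hx hxl using absurd hxl hx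

theorem norm_lt_one_of_norm_cyl_zero_lt_one {w : Disc2} (h : ‖(S.cyl k (w, 0)).1‖ < 1) :
    ‖(w : ℂ)‖ < 1 := by
  let δ : Disc2 → ℂ × Circle := T.param (S.disc k).subset (S.disc k).homeo
  have hδ : range δ = range fun w => S.cyl k (w, 0) :=
    (SolidTorus.range_param _ _).trans (S.range_cyl_zero k).symm
  obtain ⟨φ, hφ, hφδ⟩ := exists_isEmbedding_comp_eq (SolidTorus.isEmbedding_param _ _)
    (S.isEmbedding_cyl_prodMk k 0) hδ.subset
  obtain ⟨v, hv⟩ : S.cyl k (w, 0) ∈ range δ := hδ ▸ mem_range_self w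
  have hφv : φ v = w := (S.isEmbedding_cyl_prodMk k 0).injective ((hφδ v).trans hv)
  have hv1 : ‖(v : ℂ)‖ ≠ 1 := fun hv1 =>
    h.ne (hv ▸ (S.disc k).norm_param_eq_one_iff.2 hv1)
  exact hφv ▸ norm_lt_one_of_isEmbedding hφ
    (lt_of_le_of_ne (mem_closedBall_zero_iff.1 v.2) hv1)

theorem range_cyl_union_range_cyl_mem_nhds (hq : q ∈ S.face (finRotate m j)) (hlt : ‖q.1‖ < 1) :
    range (S.cyl (finRotate m j)) ∪ range (S.cyl j) ∈ 𝓝 q := by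
  obtain ⟨w, rfl⟩ : q ∈ range fun w => S.cyl (finRotate m j) (w, 0) :=
    (S.range_cyl_zero _).symm ▸ hq
  obtain ⟨ψ, hψ, hψface⟩ := exists_isEmbedding_comp_eq
    (S.isEmbedding_cyl_prodMk (finRotate m j) 0) (S.isEmbedding_cyl_prodMk j 1)
    ((S.range_cyl_zero _).trans (S.range_cyl_one j).symm).subset
  have hκ₁ := S.isEmbedding_cyl (finRotate m j)
  have hκ₂ : IsEmbedding (S.cyl j ∘ Prod.map ψ id) :=
    (S.isEmbedding_cyl j).comp (hψ.prodMap .id)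
  refine mem_of_superset (range_union_range_mem_nhds hκ₁.continuous hκ₁.injective
    hκ₂.continuous hκ₂.injective hψface (S.norm_lt_one_of_norm_cyl_zero_lt_one hlt)
    (S.eventually_mem_face_imp_eq hq) fun p p' hpp' hp => ?_)
    (union_subset_union_right _ (range_comp_subset_range _ _))
  obtain ⟨l, hl⟩ := mem_iUnion.1 <|
    S.range_cyl_inter_subset (S.finRotate_ne j) ⟨mem_range_self p, _, hpp'.symm⟩
  exact S.cyl_mem_face_iff.1 (hp l hl ▸ hl)

-- Around an interior point of a disc the two adjacent chambers fill a neighbourhood, in which a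
-- third chamber would have interior points; but distinct chambers overlap in the discs only.
theorem eq_or_eq_finRotate_of_mem_face (hq : q ∈ S.face (finRotate m j)) (hlt : ‖q.1‖ < 1)
    (hqi : q ∈ range (S.cyl i)) : i = j ∨ i = finRotate m j := by
  by_contra! hne
  obtain ⟨hij, hik⟩ := hne
  obtain ⟨x, hxN, hxi⟩ := mem_closure_iff_nhds.1
    (range_subset_closure_interior_range (S.isEmbedding_cyl i) hqi) _
    (interior_mem_nhds.2 (S.range_cyl_union_range_cyl_mem_nhds hq hlt))
  have hsub : (range (S.cyl (finRotate m j)) ∪ range (S.cyl j)) ∩ range (S.cyl i) ⊆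
      ⋃ k, S.face k := by
    rw [union_inter_distrib_right]
    exact union_subset (S.range_cyl_inter_subset hik.symm) (S.range_cyl_inter_subset hij.symm)
  have hx : x ∈ interior (⋃ k, S.face k) := interior_mono hsub <| by
    rw [interior_inter]
    exact ⟨hxN, hxi⟩
  exact (S.interior_iUnion_face ▸ hx : x ∈ (∅ : Set (ℂ × Circle)))

theorem norm_cyl_lt_one_iff (h₀ : p.2 ≠ 0) (h₁ : p.2 ≠ 1) :
    ‖(S.cyl i p).1‖ < 1 ↔ ‖(p.1 : ℂ)‖ < 1 := by
  have hsolid : interior (⋃ i, range (S.cyl i)) = {q | ‖q.1‖ < 1} :=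
    S.iUnion_range_cyl ▸ interior_disc2_prod_univ
  constructor
  · intro hlt
    have hface : S.cyl i p ∉ ⋃ k, S.face k := fun h => by
      obtain ⟨k, hk⟩ := mem_iUnion.1 h
      obtain ⟨j, rfl⟩ := (finRotate m).surjective k
      rcases S.eq_or_eq_finRotate_of_mem_face hk hlt (mem_range_self p) with rfl | rfl
      · exact h₁ (S.cyl_mem_face_finRotate_iff.1 hk)
      · exact h₀ (S.cyl_mem_face_iff.1 hk)
    have hnhds : range (S.cyl i) ∈ 𝓝 (S.cyl i p) :=
      mem_nhds_of_iUnion_mem_nhds S.isClosed_range_cyl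
        (mem_interior_iff_mem_nhds.1 (hsolid ▸ hlt)) fun j hj hpj =>
          hface (S.range_cyl_inter_subset hj ⟨hpj, mem_range_self p⟩)
    exact ((mem_interior_range_iff (S.isEmbedding_cyl i)).1
      (mem_interior_iff_mem_nhds.2 hnhds)).1
  · intro hlt
    have hint := (mem_interior_range_iff (S.isEmbedding_cyl i)).2 ⟨hlt, h₀, h₁⟩
    exact hsolid.subset (interior_mono (subset_iUnion (fun i => range (S.cyl i)) i) hint)

theorem sideAnnulus_eq (i : Fin m) : (S.chamber i).sideAnnulus =
    ((S.chamber i).carrier \ ((S.chamber i).top ∪ (S.chamber i).bot)) ∩ T.bdry := by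
  have hbdry : ∀ x : (S.chamber i).carrier, (x : X) ∉ (S.chamber i).top ∪ (S.chamber i).bot →
      ((x : X) ∈ (S.chamber i).bdry ↔ (x : X) ∈ T.bdry) := by
    intro x hx
    rw [mem_union, Chamber.coe_mem_top_iff, Chamber.coe_mem_bot_iff, not_or] at hx
    have hcyl : S.cyl i ((S.chamber i).homeo x) = T.coord (inclusion (S.chamber_sub i) x) := by
      simp only [cyl, SolidTorus.param, Homeomorph.symm_apply_apply]
    have hlt := S.norm_cyl_lt_one_iff (i := i) hx.2 hx.1
    rw [hcyl] at hlt
    rw [Chamber.coe_mem_bdry_iff, or_iff_left (not_or.2 hx.symm)]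
    refine Iff.trans ?_ (T.coe_mem_bdry_iff (x := inclusion (S.chamber_sub i) x)).symm
    have h1 := mem_closedBall_zero_iff.1 ((S.chamber i).homeo x).1.2
    have h2 := T.norm_coord_le_one (inclusion (S.chamber_sub i) x)
    rw [← h1.not_lt_iff_eq, ← h2.not_lt_iff_eq, hlt]
  ext x
  constructor
  · rintro ⟨hx, hxn⟩
    exact ⟨⟨Chamber.bdry_subset hx, hxn⟩, (hbdry ⟨x, Chamber.bdry_subset hx⟩ hxn).1 hx⟩
  · rintro ⟨⟨hxC, hxn⟩, hx⟩
    exact ⟨(hbdry ⟨x, hxC⟩ hxn).2 hx, hxn⟩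

theorem isClosed_preimage_chamber (i : Fin m) :
    IsClosed (Subtype.val ⁻¹' (S.chamber i).carrier : Set T.carrier) := by
  have h := (S.isClosed_range_cyl i).preimage T.isEmbedding_coord.continuous
  rwa [S.range_cyl, SolidTorus.coordImage,
    preimage_image_eq _ T.isEmbedding_coord.injective] at h

theorem exists_subset_chamber (K : MeridionalDisc T)
    (hK : Disjoint K.carrier (⋃ i, (S.disc i).carrier)) :
    ∃ i, K.carrier ⊆ (S.chamber i).carrier := by
  have : ConnectedSpace K.carrier := K.homeo.connectedSpace_iff.2 inferInstance
  let Z : Fin m → Set K.carrier := fun i => Subtype.val ⁻¹' (S.chamber i).carrier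
  have hZ : ∀ i, IsClosed (Z i) := fun i =>
    (S.isClosed_preimage_chamber i).preimage (continuous_inclusion K.subset)
  have hdisj : Pairwise (Disjoint on Z) := fun i j hij => disjoint_left.2 fun x hxi hxj =>
    disjoint_left.1 hK x.2 (S.overlap i j hij ⟨hxi, hxj⟩)
  have hcover : ⋃ i, Z i = univ := by
    rw [← preimage_iUnion, S.cover]
    exact eq_univ_of_forall fun x => K.subset x.2
  obtain ⟨i, hi⟩ := exists_eq_univ_of_iUnion_eq_univ hZ hdisj hcover
  exact ⟨i, fun x hx => eq_univ_iff_forall.1 hi ⟨x, hx⟩⟩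

/-- A meridional disc of the solid torus which lies in one chamber of the system and misses its top
and its bottom, regarded as an interior meridional disc of that chamber. -/
def interiorMeridionalDisc (K : MeridionalDisc T) (hK : K.carrier ⊆
      (S.chamber i).carrier \ ((S.chamber i).top ∪ (S.chamber i).bot)) :
    InteriorMeridionalDisc (S.chamber i) :=
  have hside : (S.chamber i).sideAnnulus ∩ K.carrier = K.bdry := by
    rw [S.sideAnnulus_eq, inter_right_comm, inter_eq_right.2 hK, K.inter_bdry]
  { carrier := K.carrier
    subset := hK
    homeo := K.homeo
    bdry := K.bdry
    bdry_spec := K.bdry_spec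
    inter_bdry := by
      rw [← hside, Chamber.sideAnnulus]
      ext x
      exact ⟨fun h => ⟨⟨h.2, (hK h.1).2⟩, h.1⟩, fun h => ⟨h.2, h.1.1⟩⟩
    bdry_sub := hside ▸ inter_subset_left
    essential := K.not_nullHomotopicIn (S.sideAnnulus_eq i ▸ inter_subset_right) }

end ChamberSystem

theorem missing_discs_lemma_general {T : SolidTorus X} {m : ℕ} (S : ChamberSystem T m)
    {L : Set X} {n : ℕ∞}
    (hcham : ∀ i, n ≤ chamberIndex (L ∩ (S.chamber i).carrier) (S.chamber i))
    {K : MeridionalDisc T} (hK : Disjoint K.carrier (⋃ i, (S.disc i).carrier)) :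
    n ≤ (L ∩ K.carrier).encard := by
  obtain ⟨i, hi⟩ := S.exists_subset_chamber K hK
  have hfaces : Disjoint K.carrier ((S.chamber i).top ∪ (S.chamber i).bot) := by
    rw [S.top_eq, S.bot_eq]
    exact hK.mono_right (union_subset (subset_iUnion (fun i => (S.disc i).carrier) _)
      (subset_iUnion (fun i => (S.disc i).carrier) _))
  calc n ≤ chamberIndex (L ∩ (S.chamber i).carrier) (S.chamber i) := hcham i
    _ ≤ (L ∩ (S.chamber i).carrier ∩ K.carrier).encard :=
      iInf_le _ (S.interiorMeridionalDisc K (subset_sdiff.2 ⟨hi, hfaces⟩))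
    _ ≤ (L ∩ K.carrier).encard :=
      encard_le_encard (inter_subset_inter_left _ inter_subset_left)

/-- Lemma 4.2: in the setup, if `N(L ∩ Cᵢ, Cᵢ) ≥ n` for each chamber `Cᵢ`, then
every meridional disc `K` of `T` disjoint from all the discs `Dᵢ` satisfies
`|L ∩ K| ≥ n`. -/
theorem missing_discs_lemma {X : Type} [TopologicalSpace X]
    (T : SolidTorus X) (L : Set X) (hL : IsLink L) (hLint : L ⊆ T.intr)
    (m : ℕ) (S : ChamberSystem T m) (n : ℕ)
    (htrans : S.Transversal L n)
    (hcham : ∀ i, (n : ℕ∞) ≤ chamberIndex (L ∩ (S.chamber i).carrier) (S.chamber i)) :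
    ∀ K : MeridionalDisc T, Disjoint K.carrier (⋃ i, (S.disc i).carrier) →
      (n : ℕ∞) ≤ (L ∩ K.carrier).encard :=
  fun _ hK => missing_discs_lemma_general S hcham hK
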